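/- Let N ≥ 1, s ∈ (0, min(1, N/2)), R > 0, and u_ε(x) = [(1+|x|²/ε²)^{-(N-2s)/2} - (1+R²/ε²)^{-(N-2s)/2}] χ_{B_R(0)}(x). Then lim_{ε→0} ε^{-(N-2s)} ∫_{B_R(0)} ∫_{B_R(0)^c} u_ε(x)² / |x-y|^{N+2s} dy dx = 0. -/

import Mathlib

open Real MeasureTheory Filter

lemma aux_inner (N : ℕ) (s : ℝ) (hs0 : 0 < s) :
    ∃ K : ℝ, 0 ≤ K ∧ ∀ (d : ℝ) (x : EuclideanSpace ℝ (Fin N)) (S : Set (EuclideanSpace ℝ (Fin N))),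
      0 < d → MeasurableSet S → (∀ y ∈ S, d ≤ ‖x - y‖) →
      ∫ y in S, 1 / ‖x - y‖ ^ ((N : ℝ) + 2 * s) ≤ K * d ^ (-(2 * s)) := by
  set r : ℝ := (N : ℝ) + 2 * s with hr
  have hr0 : 0 < r := by positivity
  have hint : Integrable (fun z : EuclideanSpace ℝ (Fin N) => (1 + ‖z‖) ^ (-r)) volume := by
    apply integrable_one_add_norm
    simp [hr, hs0]
  refine ⟨(2⁻¹ : ℝ) ^ (-r) * ∫ z : EuclideanSpace ℝ (Fin N), (1 + ‖z‖) ^ (-r), ?_, ?_⟩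
  · have : 0 ≤ ∫ z : EuclideanSpace ℝ (Fin N), (1 + ‖z‖) ^ (-r) :=
      integral_nonneg fun z => by positivity
    positivity
  intro d x S hd hS hdS
  set g : EuclideanSpace ℝ (Fin N) → ℝ :=
    fun z => (d / 2) ^ (-r) * (1 + ‖d⁻¹ • z‖) ^ (-r) with hg
  have hgi : Integrable g volume :=
    (hint.comp_smul (inv_ne_zero hd.ne')).const_mul _
  have hgi' : Integrable (fun y => g (x - y)) volume := hgi.comp_sub_left x
  calc ∫ y in S, 1 / ‖x - y‖ ^ r ≤ ∫ y in S, g (x - y) := by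
        apply integral_mono_of_nonneg
        · exact Eventually.of_forall fun y => by positivity
        · exact hgi'.integrableOn
        · refine (ae_restrict_iff' hS).2 (Eventually.of_forall fun y hy => ?_)
          have h1 := hdS y hy
          have h0 : 0 < ‖x - y‖ := hd.trans_le h1
          simp only [hg]
          rw [one_div, ← rpow_neg h0.le, ← mul_rpow (by positivity) (by positivity)]
          apply rpow_le_rpow_of_nonpos (by positivity) _ (by linarith)
          rw [norm_smul, norm_inv, Real.norm_of_nonneg hd.le]
          have : d / 2 * (1 + d⁻¹ * ‖x - y‖) = (d + ‖x - y‖) / 2 := by field_simp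
          linarith
    _ ≤ ∫ y, g (x - y) :=
        setIntegral_le_integral hgi' (Eventually.of_forall fun y => by simp only [hg]; positivity)
    _ = ∫ z, g z := integral_sub_left_eq_self g volume x
    _ = (d / 2) ^ (-r) * (d ^ N * ∫ z : EuclideanSpace ℝ (Fin N), (1 + ‖z‖) ^ (-r)) := by
        simp only [hg]
        rw [integral_const_mul]
        have := Measure.integral_comp_inv_smul_of_nonneg volume
          (fun z : EuclideanSpace ℝ (Fin N) => (1 + ‖z‖) ^ (-r)) hd.le
        rw [this]; simp
    _ = _ := by
        have : d ^ (-(2 * s)) = d ^ (-r) * d ^ N := by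
          rw [← rpow_natCast, ← rpow_add hd]; congr 1; rw [hr]; ring
        rw [this, div_eq_mul_inv, mul_rpow hd.le (by norm_num)]
        ring

lemma aux_bern (q p : ℝ) (hq0 : 0 ≤ q) (hq1 : q ≤ 1) (hp : 0 < p) :
    1 - q ^ p ≤ max 1 p * (1 - q) := by
  rcases le_total p 1 with h | h
  · have : q ^ (1:ℝ) ≤ q ^ p := rpow_le_rpow_of_exponent_ge' hq0 hq1 hp.le h
    rw [rpow_one] at this
    rw [max_eq_left h]; linarith
  · have := one_add_mul_self_le_rpow_one_add (s := q - 1) (by linarith) h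
    rw [max_eq_right h]
    have e : 1 + (q - 1) = q := by ring
    rw [e] at this
    linarith

lemma aux_alg (a δ ε r R : ℝ) (ha : 0 < a) (hδ0 : 0 < δ) (hδ : δ ≤ a) (hε : 0 < ε) (hr : 0 < r)
    (hrR : r < R) :
    ε ^ (-a) * ((1 + r ^ 2 / ε ^ 2) ^ (-a / 2) - (1 + R ^ 2 / ε ^ 2) ^ (-a / 2)) ^ 2 ≤
      ε ^ δ * r ^ (-(a + δ)) * (max 1 (a / 2) * (2 / R) * (R - r)) ^ 2 := by
  have hR : 0 < R := hr.trans hrR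
  set A := 1 + r ^ 2 / ε ^ 2 with hA
  set B := 1 + R ^ 2 / ε ^ 2 with hB
  have hA1 : 1 ≤ A := by rw [hA]; have : 0 ≤ r ^ 2 / ε ^ 2 := by positivity
                         linarith
  have hA0 : 0 < A := by linarith
  have hAB : A ≤ B := by rw [hA, hB]; gcongr
  have hB0 : 0 < B := by linarith
  have hq1 : A / B ≤ 1 := (div_le_one hB0).2 hAB
  have hfac : A ^ (-a / 2) - B ^ (-a / 2) = A ^ (-a / 2) * (1 - (A / B) ^ (a / 2)) := by
    rw [div_rpow hA0.le hB0.le, neg_div, rpow_neg hA0.le, rpow_neg hB0.le]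
    have := (rpow_pos_of_pos hA0 (a / 2)).ne'
    have := (rpow_pos_of_pos hB0 (a / 2)).ne'
    field_simp
  have hb := aux_bern (A / B) (a / 2) (by positivity) hq1 (by positivity)
  have hq : 1 - A / B ≤ 2 / R * (R - r) := by
    have e : 1 - A / B = (R + r) * (R - r) / (ε ^ 2 + R ^ 2) := by
      rw [hA, hB]; field_simp; ring
    have h2 : (R + r) / (ε ^ 2 + R ^ 2) ≤ 2 / R := by
      rw [div_le_div_iff₀ (by positivity) hR]; nlinarith [sq_nonneg ε]
    rw [e, mul_div_right_comm]
    exact mul_le_mul_of_nonneg_right h2 (by linarith)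
  have hq' : 1 - (A / B) ^ (a / 2) ≤ max 1 (a / 2) * (2 / R) * (R - r) := by
    refine hb.trans ?_
    rw [mul_assoc]
    exact mul_le_mul_of_nonneg_left hq (by positivity)
  have hq0 : 0 ≤ 1 - (A / B) ^ (a / 2) := by
    have := rpow_le_one (by positivity : 0 ≤ A / B) hq1 (by positivity : 0 ≤ a / 2)
    linarith
  have hAA : ε ^ (-a) * (A ^ (-a / 2)) ^ 2 ≤ ε ^ δ * r ^ (-(a + δ)) := by
    have e1 : (A ^ (-a / 2)) ^ 2 = A ^ (-((a - δ) / 2)) * A ^ (-((a + δ) / 2)) := by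
      rw [pow_two, ← rpow_add hA0, ← rpow_add hA0]; congr 1; ring
    have h1 : A ^ (-((a - δ) / 2)) ≤ 1 := rpow_le_one_of_one_le_of_nonpos hA1 (by linarith)
    have h2 : A ^ (-((a + δ) / 2)) ≤ ((r / ε) ^ 2) ^ (-((a + δ) / 2)) := by
      apply rpow_le_rpow_of_nonpos (by positivity) _ (by linarith)
      rw [hA, div_pow]; linarith
    have e2 : ((r / ε) ^ 2) ^ (-((a + δ) / 2)) = r ^ (-(a + δ)) * ε ^ (a + δ) := by
      rw [← rpow_natCast, ← rpow_mul (by positivity), div_rpow hr.le hε.le, div_eq_mul_inv,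
        ← rpow_neg hε.le]
      congr 2 <;> push_cast <;> ring
    have e3 : ε ^ δ = ε ^ (-a) * ε ^ (a + δ) := by rw [← rpow_add hε]; congr 1; ring
    calc _ ≤ ε ^ (-a) * (1 * (r ^ (-(a + δ)) * ε ^ (a + δ))) := by
          rw [e1, ← e2]; gcongr
      _ = _ := by rw [e3]; ring
  rw [hfac, mul_pow, ← mul_assoc]
  gcongr

theorem rescaled_cross_term_vanishes (N : ℕ) (hN : 1 ≤ N) (s : ℝ)
    (hs0 : 0 < s) (hs1 : s < min 1 ((N : ℝ) / 2)) (R : ℝ) (hR : 0 < R) :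
    Tendsto
      (fun ε : ℝ =>
        ε ^ (-(((N : ℝ) - 2 * s))) *
          ∫ x in Metric.ball (0 : EuclideanSpace ℝ (Fin N)) R,
            ∫ y in (Metric.ball (0 : EuclideanSpace ℝ (Fin N)) R)ᶜ,
              ((1 + ‖x‖ ^ 2 / ε ^ 2) ^ (-(((N : ℝ) - 2 * s)) / 2) -
                  (1 + R ^ 2 / ε ^ 2) ^ (-(((N : ℝ) - 2 * s)) / 2)) ^ 2 /
                ‖x - y‖ ^ ((N : ℝ) + 2 * s))
      (nhdsWithin 0 (Set.Ioi 0)) (nhds 0) := by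
  have hs1' : s < 1 := hs1.trans_le (min_le_left _ _)
  have hsN : s < (N : ℝ) / 2 := hs1.trans_le (min_le_right _ _)
  obtain ⟨K, hK0, hK⟩ := aux_inner N s hs0
  generalize ha_def : (N : ℝ) - 2 * s = a
  have ha : 0 < a := by linarith
  obtain ⟨δ, hδ0, hδa, hδs⟩ : ∃ δ : ℝ, 0 < δ ∧ δ ≤ a ∧ δ ≤ s :=
    ⟨min a s, lt_min ha hs0, min_le_left _ _, min_le_right _ _⟩
  set C : ℝ := max 1 (a / 2) * (2 / R) with hC
  set M : ℝ := C ^ 2 * K * R ^ (2 - 2 * s) with hM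
  have hM0 : 0 ≤ M := by positivity
  have hfr : Module.finrank ℝ (EuclideanSpace ℝ (Fin N)) = N := by simp
  have : Nonempty (Fin N) := ⟨⟨0, hN⟩⟩
  have : Nontrivial (EuclideanSpace ℝ (Fin N)) :=
    Module.nontrivial_of_finrank_pos (R := ℝ) (by rw [hfr]; exact hN)
  have hint : IntegrableOn (fun x : EuclideanSpace ℝ (Fin N) => ‖x‖ ^ (-(a + δ)))
      (Metric.ball 0 R) volume := by
    refine integrableOn_ball_of_norm_le_rpow (C := 1) (α := a + δ) (by rw [hfr]; exact hN)
      ?_ ?_ ?_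
    · rw [hfr]; linarith
    · refine Eventually.of_forall fun x => ?_
      rw [one_mul, Real.norm_of_nonneg (by positivity)]
    · exact Measurable.aestronglyMeasurable (by fun_prop)
  set J := ∫ x in Metric.ball (0 : EuclideanSpace ℝ (Fin N)) R, ‖x‖ ^ (-(a + δ)) with hJ
  have hlim : Tendsto (fun ε : ℝ => ε ^ δ * (M * J)) (nhdsWithin 0 (Set.Ioi 0)) (nhds 0) := by
    have h1 : Tendsto (fun ε : ℝ => ε ^ δ) (nhdsWithin 0 (Set.Ioi 0)) (nhds 0) := by
      have := (Real.continuousAt_rpow_const 0 δ (Or.inr hδ0.le)).tendsto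
      rw [zero_rpow hδ0.ne'] at this
      exact this.mono_left nhdsWithin_le_nhds
    simpa using h1.mul_const (M * J)
  refine squeeze_zero' ?_ ?_ hlim
  · filter_upwards [self_mem_nhdsWithin] with ε hε
    have hε : 0 < ε := hε
    refine mul_nonneg (by positivity) (integral_nonneg fun x => integral_nonneg fun y => ?_)
    simp only [Pi.zero_apply]
    positivity
  · filter_upwards [self_mem_nhdsWithin] with ε hε
    have hε : 0 < ε := hε
    rw [← integral_const_mul, hJ, ← mul_assoc, ← integral_const_mul]
    apply integral_mono_of_nonneg
    · refine Eventually.of_forall fun x => ?_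
      simp only [Pi.zero_apply]
      refine mul_nonneg (by positivity) (integral_nonneg fun y => ?_)
      simp only [Pi.zero_apply]
      positivity
    · exact hint.const_mul _
    · have hne : ∀ᵐ x : EuclideanSpace ℝ (Fin N), x ≠ 0 := by
        simp [ae_iff, measure_singleton]
      refine (ae_restrict_iff' Metric.isOpen_ball.measurableSet).2 ?_
      filter_upwards [hne] with x hx hxR
      have hr : 0 < ‖x‖ := norm_pos_iff.2 hx
      have hrR : ‖x‖ < R := by simpa using hxR
      have hd : 0 < R - ‖x‖ := by linarith
      have hin := hK (R - ‖x‖) x (Metric.ball 0 R)ᶜ hd Metric.isOpen_ball.measurableSet.compl (by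
        intro y hy
        have hy' : R ≤ ‖y‖ := by simpa using hy
        have := norm_sub_norm_le y x
        rw [norm_sub_rev y x] at this
        linarith)
      have halg := aux_alg a δ ε ‖x‖ R ha hδ0 hδa hε hr hrR
      rw [← hC] at halg
      have hpow : (R - ‖x‖) ^ 2 * (R - ‖x‖) ^ (-(2 * s)) ≤ R ^ (2 - 2 * s) := by
        rw [← rpow_natCast, ← rpow_add hd]
        have : ((2 : ℕ) : ℝ) + -(2 * s) = 2 - 2 * s := by push_cast; ring
        rw [this]
        exact rpow_le_rpow hd.le (by linarith) (by linarith)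
      have key : ∀ c : ℝ, ∫ y in (Metric.ball (0 : EuclideanSpace ℝ (Fin N)) R)ᶜ,
          c / ‖x - y‖ ^ ((N : ℝ) + 2 * s) =
          c * ∫ y in (Metric.ball (0 : EuclideanSpace ℝ (Fin N)) R)ᶜ,
          1 / ‖x - y‖ ^ ((N : ℝ) + 2 * s) := by
        intro c
        rw [← integral_const_mul]
        congr 1
        funext y
        ring
      beta_reduce
      rw [key, ← mul_assoc]
      have hI0 : 0 ≤ ∫ y in (Metric.ball (0 : EuclideanSpace ℝ (Fin N)) R)ᶜ,
          1 / ‖x - y‖ ^ ((N : ℝ) + 2 * s) := integral_nonneg fun y => by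
            simp only [Pi.zero_apply]; positivity
      refine (mul_le_mul halg hin hI0 (by positivity)).trans ?_
      calc _ = ε ^ δ * ‖x‖ ^ (-(a + δ)) * (C ^ 2 * K) *
            ((R - ‖x‖) ^ 2 * (R - ‖x‖) ^ (-(2 * s))) := by ring
        _ ≤ ε ^ δ * ‖x‖ ^ (-(a + δ)) * (C ^ 2 * K) * R ^ (2 - 2 * s) := by gcongr
        _ = _ := by rw [hM]; ring
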